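/- Let k, r ∈ ℕ, let M be a finite multiset of vectors in {0,1,□}^d with cover (R_M, T_M), and let M' ⊆ M be such that the compatibility graph on M' with threshold 2r has at most k connected components, with γ_max(M') the maximum diameter of a connected component. Then there exists D' ⊆ [d] with |D'| ≤ k·γ_max(M')·(|M'|−1) + |R_M|·(|M'|−1)·(2r+1) + |T_M| such that the following holds: there exist a completion M* of M' and a set S ⊆ {0,1}^d with |S| ≤ k such that every vector of M* is within Hamming distance r of some vector in S, if and only if there exist a completion N* of M'_{D'} and a set S' ⊆ {0,1}^{D'} with |S'| ≤ k such that every vector of N* is within Hamming distance r of some vector in S'. -/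

import Mathlib

open scoped Classical

/-- δ(a,b) for incomplete vectors: the number of coordinates on which
both entries are known and differ. -/
noncomputable def pdist {ι : Type} [Fintype ι] (a b : ι → Option Bool) : ℕ :=
  (Finset.univ.filter fun i => ∃ x y : Bool, a i = some x ∧ b i = some y ∧ x ≠ y).card

/-- The compatibility graph on a finite set of incomplete vectors with threshold ρ. -/
def compatGraph {ι : Type} [Fintype ι] (S : Finset (ι → Option Bool)) (ρ : ℕ) :
    SimpleGraph {x // x ∈ S} :=
  SimpleGraph.fromRel fun a b => pdist a.1 b.1 ≤ ρ

/-- γ_max: the maximum diameter of a connected component of the compatibility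
graph on `S` with threshold ρ. -/
noncomputable def gammaMax {ι : Type} [Fintype ι]
    (S : Finset (ι → Option Bool)) (ρ : ℕ) : ℕ :=
  sSup {n | ∃ a b : {x // x ∈ S}, (compatGraph S ρ).Reachable a b ∧ pdist a.1 b.1 = n}

/-- `Mc` is a completion of `M`: a multiset of complete vectors in bijection with `M`,
agreeing with the corresponding vectors on all non-missing entries. -/
def IsCompletion {ι : Type} (M : Multiset (ι → Option Bool))
    (Mc : Multiset (ι → Bool)) : Prop :=
  Multiset.Rel (fun a c => ∀ i (x : Bool), a i = some x → c i = x) M Mc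

/-- The multiset `Mc` of complete vectors can be partitioned into at most `k` parts,
each of diameter at most `r`. -/
def HasDiamPartitionM {ι : Type} [Fintype ι] (Mc : Multiset (ι → Bool)) (k r : ℕ) : Prop :=
  ∃ P : Multiset (Multiset (ι → Bool)), Multiset.card P ≤ k ∧ P.join = Mc ∧
    ∀ p ∈ P, ∀ a ∈ p, ∀ b ∈ p, hammingDist a b ≤ r

/-- The restriction of an incomplete vector to the coordinates in `D`. -/
def restrictV {ι : Type} (D : Finset ι) (a : ι → Option Bool) :
    {i // i ∈ D} → Option Bool :=
  fun i => a i.1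

/-!
A vector that is within distance `r` of a center can be completed along that center, so only
conflicts (coordinates where two vectors are known and differ) matter. If `D` contains, for every
two vectors, all of their conflicts or at least `2r + 1` of them, then vectors sharing a center on
`D` have no conflicts outside `D`, and the center extends to the remaining coordinates.

To find a small such `D`, let `n` be the number of vectors and suppose that they fall into at most
`k` classes of diameter at most `γ`.

* If `γ n ≤ 2r`, each class has a center, and `D = ∅` works. Fix a cyclic tournament in which every
  vector beats at most half of the others; choosing each entry of the center suitably, every
  coordinate where the center disagrees with `v` is a conflict of `v` with a vector that `v` beats,
  so there are at most `γ n / 2` of them.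
* Otherwise `2r + 1 ≤ γ n`. Pairs with a vector in `R` are resolved one at a time. The other vectors
  are complete outside `T`; pick `c ≤ k` of them as representatives of the classes. At most
  `(n - c) γ` coordinates make every vector equal to a representative outside `T` and these
  coordinates. The representatives are separated `2r + 1` times by at most `(c - 1)(2r + 1)`
  coordinates, by iterating Bondy's theorem that `c` rows are separated by `c - 1` columns. Finally
  `(n - c) γ + (c - 1) γ n = c γ (n - 1)`.
-/

section

open Finset

variable {α ι β : Type*}

theorem exists_balanced_tournament (α : Type*) [Fintype α] :
    ∃ P : α → α → Prop, (∀ u v, u ≠ v → P u v ∨ P v u) ∧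
      ∀ u, #{v | P u v} ≤ Fintype.card α / 2 := by
  rcases isEmpty_or_nonempty α with hα | hα
  · exact ⟨fun _ _ => True, by simp, by simp⟩
  set n := Fintype.card α
  have : NeZero n := ⟨Fintype.card_ne_zero⟩
  let e : α ≃ ZMod n := Fintype.equivOfCardEq (ZMod.card n).symm
  refine ⟨fun u v => (e v - e u).val ∈ Icc 1 (n / 2), fun u v huv => ?_, fun u => ?_⟩
  · have hne : e v - e u ≠ 0 := sub_ne_zero.2 (e.injective.ne huv.symm)
    have hneg : (e u - e v).val = n - (e v - e u).val := by
      rw [← neg_sub, ZMod.neg_val, if_neg hne]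
    have hpos : 0 < (e v - e u).val := ZMod.val_pos.2 hne
    have hlt := ZMod.val_lt (e v - e u)
    simp only [mem_Icc]
    omega
  · have hinj : Function.Injective fun v => (e v - e u).val :=
      (ZMod.val_injective n).comp (sub_left_injective.comp e.injective)
    simpa using card_le_card_of_injOn (s := {v | (e v - e u).val ∈ Icc 1 (n / 2)})
      (t := Icc 1 (n / 2)) _ (fun v hv => (mem_filter.1 hv).2) hinj.injOn

theorem exists_finset_eqOn_imp_eqOn (f : α → ι → β) (U : Set ι) (V : Finset α) :
    ∃ E : Finset ι, ↑E ⊆ U ∧ #E ≤ #V - 1 ∧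
      ∀ u ∈ V, ∀ v ∈ V, Set.EqOn (f u) (f v) E → Set.EqOn (f u) (f v) U := by
  induction V using Finset.induction_on with
  | empty => exact ⟨∅, by simp, by simp, by simp⟩
  | insert a V ha ih =>
    obtain ⟨E, hEU, hE, hsep⟩ := ih
    rw [card_insert_of_notMem ha]
    by_cases h : ∀ u ∈ V, Set.EqOn (f u) (f a) E → Set.EqOn (f u) (f a) U
    · refine ⟨E, hEU, by omega, ?_⟩
      simp only [forall_mem_insert]
      exact ⟨⟨fun _ _ _ => rfl, fun v hv hav => (h v hv hav.symm).symm⟩,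
        fun u hu => ⟨h u hu, hsep u hu⟩⟩
    · simp only [Set.EqOn] at h
      push Not at h
      obtain ⟨u, hu, huE, j, hjU, hj⟩ := h
      have hV : 0 < #V := card_pos.2 ⟨u, hu⟩
      -- A row of `V` agreeing with `a` on `E` also agrees with `u` there, hence on `U` and at `j`,
      -- but `u` and `a` differ at `j`.
      have hne : ∀ v ∈ V, ¬ Set.EqOn (f v) (f a) (insert j E) := fun v hv hva =>
        hj ((hsep u hu v hv (fun i hi => (huE hi).trans (hva (Set.mem_insert_of_mem j hi)).symm)
          hjU).trans (hva (Set.mem_insert j E)))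
      refine ⟨insert j E, by simp [Set.insert_subset_iff, hjU, hEU],
        (card_insert_le _ _).trans (by omega), ?_⟩
      simp only [forall_mem_insert, coe_insert]
      exact ⟨⟨fun _ _ _ => rfl, fun v hv hav => absurd hav.symm (hne v hv)⟩,
        fun v hv => ⟨fun hva => absurd hva (hne v hv),
          fun w hw hvw => hsep v hv w hw (hvw.mono (Set.subset_insert j E))⟩⟩

theorem exists_finset_eqOn_diff_or_card_le (f : α → ι → β) (U : Set ι) (V : Finset α) (m : ℕ) :
    ∃ E : Finset ι, ↑E ⊆ U ∧ #E ≤ m * (#V - 1) ∧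
      ∀ u ∈ V, ∀ v ∈ V, Set.EqOn (f u) (f v) (U \ E) ∨
        ∃ C ⊆ E, #C = m ∧ ∀ i ∈ C, f u i ≠ f v i := by
  induction m with
  | zero => exact ⟨∅, by simp, by simp, fun _ _ _ _ => Or.inr ⟨∅, by simp⟩⟩
  | succ m ih =>
    obtain ⟨E, hEU, hE, hsep⟩ := ih
    obtain ⟨E', hEU', hE', hsep'⟩ := exists_finset_eqOn_imp_eqOn f (U \ E) V
    refine ⟨E ∪ E', ?_, ?_, fun u hu v hv => ?_⟩
    · rw [coe_union]
      exact Set.union_subset hEU (hEU'.trans Set.sdiff_subset)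
    · have := card_union_le E E'
      rw [Nat.succ_mul]
      omega
    by_cases h : Set.EqOn (f u) (f v) E'
    · left
      refine (hsep' u hu v hv h).mono ?_
      rw [coe_union, ← Set.sdiff_sdiff]
      exact Set.sdiff_subset
    · right
      simp only [Set.EqOn] at h
      push Not at h
      obtain ⟨j, hj, hne⟩ := h
      obtain ⟨C, hCE, rfl, hC⟩ := (hsep u hu v hv).resolve_left fun h => hne (h (hEU' hj))
      have hjC : j ∉ C := fun hjC => (hEU' hj).2 (hCE hjC)
      exact ⟨insert j C, insert_subset (mem_union_right _ hj) (hCE.trans subset_union_left),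
        card_insert_of_notMem hjC, by simpa [hne] using hC⟩

end

section

open Finset

variable {ι : Type} {α κ : Type*} [Fintype ι] {a b : ι → Option Bool} {D E T : Finset ι} {i : ι}
  {k m r γ : ℕ} {M : Multiset (ι → Option Bool)}

/-- The coordinates counted by `pdist`: both entries are known and differ. -/
noncomputable def conflicts (a b : ι → Option Bool) : Finset ι :=
  {i | a i ≠ none ∧ b i ≠ none ∧ a i ≠ b i}

theorem mem_conflicts : i ∈ conflicts a b ↔ a i ≠ none ∧ b i ≠ none ∧ a i ≠ b i := by
  simp [conflicts]

theorem mem_conflicts_some_comp {s : ι → Bool} :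
    i ∈ conflicts (some ∘ s) a ↔ a i = some (!s i) := by
  rw [mem_conflicts]
  cases a i <;> simp [Bool.eq_not, eq_comm]

theorem card_conflicts (a b : ι → Option Bool) : #(conflicts a b) = pdist a b := by
  unfold conflicts pdist
  congr 1 with i
  rw [mem_filter_univ, mem_filter_univ]
  cases a i <;> cases b i <;> simp

theorem conflicts_comm (a b : ι → Option Bool) : conflicts a b = conflicts b a := by
  ext i
  simp only [mem_conflicts, ne_comm (a := a i) (b := b i)]
  tauto

theorem conflicts_self (a : ι → Option Bool) : conflicts a a = ∅ := by
  simp [conflicts]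

theorem pdist_le_add_pdist_some_comp (s : ι → Bool) (a b : ι → Option Bool) :
    pdist a b ≤ pdist (some ∘ s) a + pdist (some ∘ s) b := by
  simp only [← card_conflicts]
  refine (card_le_card fun i hi => ?_).trans (card_union_le _ _)
  rw [mem_conflicts] at hi
  rw [mem_union, mem_conflicts_some_comp, mem_conflicts_some_comp]
  rcases ha : a i with _ | _ | _ <;> rcases hb : b i with _ | _ | _ <;> cases s i <;> simp_all

theorem pdist_restrictV (D : Finset ι) (a b : ι → Option Bool) :
    pdist (restrictV D a) (restrictV D b) = #(conflicts a b ∩ D) := by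
  rw [← card_conflicts, ← filter_mem_eq_inter, ← card_subtype]
  congr 1 with i
  simp [mem_conflicts, restrictV]

theorem pdist_some_comp_le_hammingDist {s c : ι → Bool}
    (hc : ∀ i x, a i = some x → c i = x) : pdist (some ∘ s) a ≤ hammingDist s c := by
  rw [← card_conflicts]
  refine card_le_card fun i hi => ?_
  simp [hc i _ (mem_conflicts_some_comp.1 hi)]

theorem hammingDist_getD (s : ι → Bool) (a : ι → Option Bool) :
    hammingDist s (fun i => (a i).getD (s i)) = pdist (some ∘ s) a := by
  rw [← card_conflicts]
  unfold hammingDist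
  congr 1 with i
  rw [mem_conflicts_some_comp, mem_filter_univ]
  cases ha : a i with
  | none => simp [ha]
  | some x => simp [ha, Bool.eq_not, eq_comm (a := x)]

/-- Some set of at most `k` complete vectors, the centers, comes within distance `r` of every
vector of `M`. Missing entries of `M` count as agreeing, so that no completion has to be chosen. -/
def HasCenters (M : Multiset (ι → Option Bool)) (k r : ℕ) : Prop :=
  ∃ S : Finset (ι → Bool), #S ≤ k ∧ ∀ v ∈ M, ∃ s ∈ S, pdist (some ∘ s) v ≤ r

theorem exists_isCompletion_iff_hasCenters (M : Multiset (ι → Option Bool)) (k r : ℕ) :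
    (∃ Mc : Multiset (ι → Bool), IsCompletion M Mc ∧
      ∃ S : Finset (ι → Bool), #S ≤ k ∧ ∀ a ∈ Mc, ∃ s ∈ S, hammingDist s a ≤ r) ↔
    HasCenters M k r := by
  constructor
  · rintro ⟨Mc, hMc, S, hS, h⟩
    refine ⟨S, hS, fun v hv => ?_⟩
    obtain ⟨c, hc, hvc⟩ := Multiset.exists_mem_of_rel_of_mem hMc hv
    obtain ⟨s, hs, hsc⟩ := h c hc
    exact ⟨s, hs, (pdist_some_comp_le_hammingDist hvc).trans hsc⟩
  · rintro ⟨S, hS, h⟩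
    choose! c hcS hc using h
    refine ⟨M.map fun v i => (v i).getD (c v i), ?_, S, hS, ?_⟩
    · refine Multiset.rel_map_right.2 (Multiset.rel_refl_of_refl_on fun v _ i x hx => ?_)
      simp [hx]
    · rw [Multiset.forall_mem_map_iff]
      exact fun v hv => ⟨c v, hcS v hv, (hammingDist_getD _ _).trans_le (hc v hv)⟩

theorem HasCenters.restrict (h : HasCenters M k r) (D : Finset ι) :
    HasCenters (M.map (restrictV D)) k r := by
  obtain ⟨S, hS, h⟩ := h
  refine ⟨S.image fun s i => s i.1, card_image_le.trans hS, ?_⟩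
  simp only [Multiset.forall_mem_map_iff, exists_mem_image]
  refine fun v hv => (h v hv).imp fun s hs => ⟨hs.1, ?_⟩
  calc pdist (restrictV D (some ∘ s)) (restrictV D v)
      = #(conflicts (some ∘ s) v ∩ D) := pdist_restrictV D _ _
    _ ≤ #(conflicts (some ∘ s) v) := card_le_card inter_subset_left
    _ ≤ r := (card_conflicts _ _).trans_le hs.2

theorem exists_extension_conflicts_subset (s : {i // i ∈ D} → Bool)
    {F : Set (ι → Option Bool)} (hF : ∀ v ∈ F, ∀ w ∈ F, conflicts v w ⊆ D) :
    ∃ t : ι → Bool, restrictV D (some ∘ t) = some ∘ s ∧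
      ∀ v ∈ F, conflicts (some ∘ t) v ⊆ D := by
  refine ⟨fun i => if hi : i ∈ D then s ⟨i, hi⟩ else decide (∃ w ∈ F, w i = some true), ?_, ?_⟩
  · funext i
    simp [restrictV]
  intro v hv i hi
  by_contra hiD
  simp only [mem_conflicts_some_comp, hiD, dite_false] at hi
  by_cases hw : ∃ w ∈ F, w i = some true
  · simp only [hw, decide_true, Bool.not_true] at hi
    obtain ⟨w, hwF, hwi⟩ := hw
    exact hiD (hF v hv w hwF (mem_conflicts.2 (by simp [hi, hwi])))
  · simp only [hw, decide_false, Bool.not_false] at hi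
    exact hw ⟨v, hv, hi⟩

/-- `D` resolves the pair `a`, `b` up to `m` if it contains all of their conflicts, or at least `m`
of them. For `m = 2 * r + 1`, vectors that share a center of radius `r` on `D` then have no
conflicts outside `D`. -/
def Resolves (D : Finset ι) (m : ℕ) (a b : ι → Option Bool) : Prop :=
  conflicts a b ⊆ D ∨ m ≤ #(conflicts a b ∩ D)

theorem Resolves.mono (h : Resolves D m a b) (hDE : D ⊆ E) : Resolves E m a b :=
  h.imp (fun h => h.trans hDE) fun h => h.trans (card_le_card (inter_subset_inter_left hDE))

theorem Resolves.symm (h : Resolves D m a b) : Resolves D m b a := by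
  rwa [Resolves, conflicts_comm]

theorem HasCenters.of_restrict (hD : ∀ v ∈ M, ∀ w ∈ M, Resolves D (2 * r + 1) v w)
    (h : HasCenters (M.map (restrictV D)) k r) : HasCenters M k r := by
  obtain ⟨S, hS, h⟩ := h
  have hclose (s : {i // i ∈ D} → Bool) :
      ∀ v ∈ {v | v ∈ M ∧ pdist (some ∘ s) (restrictV D v) ≤ r},
      ∀ w ∈ {v | v ∈ M ∧ pdist (some ∘ s) (restrictV D v) ≤ r}, conflicts v w ⊆ D := by
    rintro v ⟨hv, hsv⟩ w ⟨hw, hsw⟩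
    refine (hD v hv w hw).resolve_right ?_
    have := pdist_le_add_pdist_some_comp s (restrictV D v) (restrictV D w)
    rw [pdist_restrictV] at this
    omega
  choose t ht htsub using fun s => exists_extension_conflicts_subset s (hclose s)
  refine ⟨S.image t, card_image_le.trans hS, fun v hv => ?_⟩
  obtain ⟨s, hs, hsv⟩ := h _ (Multiset.mem_map_of_mem _ hv)
  refine ⟨t s, mem_image_of_mem t hs, ?_⟩
  rwa [← card_conflicts, ← inter_eq_left.2 (htsub s v ⟨hv, hsv⟩), ← pdist_restrictV, ht]

theorem exists_complete_conflicts_of_total (f : α → ι → Option Bool) {P : α → α → Prop}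
    (hP : ∀ u v, u ≠ v → P u v ∨ P v u) :
    ∃ s : ι → Bool, ∀ v, ∀ i ∈ conflicts (some ∘ s) (f v), ∃ w, P v w ∧
      i ∈ conflicts (f v) (f w) := by
  refine ⟨fun i => decide (∃ u, f u i = some true ∧ ∀ w, f w i = some false → ¬ P u w),
    fun v i hi => ?_⟩
  rw [mem_conflicts_some_comp] at hi
  by_cases h : ∃ u, f u i = some true ∧ ∀ w, f w i = some false → ¬ P u w
  · simp only [h, decide_true, Bool.not_true] at hi
    obtain ⟨u, hu, hPu⟩ := h
    have huv : u ≠ v := by rintro rfl; simp [hu] at hi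
    exact ⟨u, (hP u v huv).resolve_left (hPu v hi), mem_conflicts.2 (by simp [hi, hu])⟩
  · simp only [h, decide_false, Bool.not_false] at hi
    push Not at h
    obtain ⟨w, hw, hPw⟩ := h v hi
    exact ⟨w, hPw, mem_conflicts.2 (by simp [hi, hw])⟩

theorem exists_center_of_mul_card_le [Fintype α] (f : α → ι → Option Bool)
    (hγ : ∀ u v, pdist (f u) (f v) ≤ γ) (hr : γ * Fintype.card α ≤ 2 * r) :
    ∃ s : ι → Bool, ∀ v, pdist (some ∘ s) (f v) ≤ r := by
  obtain ⟨P, hP, hout⟩ := exists_balanced_tournament α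
  obtain ⟨s, hs⟩ := exists_complete_conflicts_of_total f hP
  refine ⟨s, fun v => ?_⟩
  have hsub : conflicts (some ∘ s) (f v) ⊆
      ({w | P v w} : Finset α).biUnion fun w => conflicts (f v) (f w) :=
    fun i hi => by simpa using hs v i hi
  calc pdist (some ∘ s) (f v)
      = #(conflicts (some ∘ s) (f v)) := (card_conflicts _ _).symm
    _ ≤ #(({w | P v w} : Finset α).biUnion fun w => conflicts (f v) (f w)) := card_le_card hsub
    _ ≤ #{w | P v w} * γ := card_biUnion_le_card_mul _ _ _ fun w _ =>
        (card_conflicts _ _).trans_le (hγ v w)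
    _ ≤ Fintype.card α / 2 * γ := Nat.mul_le_mul_right γ (hout v)
    _ ≤ r := by
        have := Nat.mul_div_le (Fintype.card α) 2
        nlinarith

theorem HasCenters.of_classes [Finite κ] (c : {v // v ∈ M.toFinset} → κ) (hκ : Nat.card κ ≤ k)
    (hc : ∀ u v, c u = c v → pdist u.1 v.1 ≤ γ) (hr : γ * #M.toFinset ≤ 2 * r) :
    HasCenters M k r := by
  have hclass (x : κ) :
      ∃ s : ι → Bool, ∀ v : {v // c v = x}, pdist (some ∘ s) v.1.1 ≤ r := by
    refine exists_center_of_mul_card_le _ (fun u v => hc u.1 v.1 (u.2.trans v.2.symm))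
      (le_trans ?_ hr)
    gcongr
    exact (Fintype.card_subtype_le _).trans_eq (Fintype.card_coe _)
  choose s hs using hclass
  have := Fintype.ofFinite κ
  refine ⟨univ.image s, ?_, fun v hv => ?_⟩
  · rw [Nat.card_eq_fintype_card] at hκ
    exact card_image_le.trans hκ
  · let v' : {v // v ∈ M.toFinset} := ⟨v, Multiset.mem_toFinset.2 hv⟩
    exact ⟨s (c v'), mem_image_of_mem s (mem_univ _), hs (c v') ⟨v', rfl⟩⟩

theorem exists_finset_eqOn_compl_of_net {f : α → ι → Option Bool} {V N : Finset α}
    (hT : ∀ a ∈ N, ∀ i, f a i = none → i ∈ T) (hVN : V ⊆ N)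
    (hV : ∀ a ∈ N, ∃ b ∈ V, pdist (f a) (f b) ≤ γ) :
    ∃ E : Finset ι, #E ≤ (#N - #V) * γ ∧
      ∀ a ∈ N, ∃ b ∈ V, Set.EqOn (f a) (f b) (↑(T ∪ E))ᶜ := by
  choose! rep hrepV hrep using hV
  refine ⟨(N \ V).biUnion fun a => conflicts (f a) (f (rep a)), ?_, fun a ha => ?_⟩
  · rw [← card_sdiff_of_subset hVN]
    exact card_biUnion_le_card_mul _ _ _ fun a ha =>
      (card_conflicts _ _).trans_le (hrep a (mem_sdiff.1 ha).1)
  by_cases haV : a ∈ V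
  · exact ⟨a, haV, Set.eqOn_refl _ _⟩
  refine ⟨rep a, hrepV a ha, fun i hi => ?_⟩
  simp only [Set.mem_compl_iff, mem_coe, mem_union, mem_biUnion, mem_sdiff, not_or, not_exists,
    not_and] at hi
  by_contra hne
  exact hi.2 a ⟨ha, haV⟩ (mem_conflicts.2
    ⟨mt (hT a ha i) hi.1, mt (hT _ (hVN (hrepV a ha)) i) hi.1, hne⟩)

theorem exists_finset_resolves_of_net {f : α → ι → Option Bool} {V N : Finset α}
    (hT : ∀ a ∈ N, ∀ i, f a i = none → i ∈ T) (hVN : V ⊆ N)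
    (hV : ∀ a ∈ N, ∃ b ∈ V, pdist (f a) (f b) ≤ γ) (m : ℕ) :
    ∃ E : Finset ι, #E ≤ (#N - #V) * γ + m * (#V - 1) ∧
      ∀ a ∈ N, ∀ b ∈ N, Resolves (T ∪ E) m (f a) (f b) := by
  obtain ⟨E₀, hE₀, hnet⟩ := exists_finset_eqOn_compl_of_net hT hVN hV
  obtain ⟨E₁, hE₁U, hE₁, hsep⟩ :=
    exists_finset_eqOn_diff_or_card_le f (↑(T ∪ E₀) : Set ι)ᶜ V m
  refine ⟨E₀ ∪ E₁, (card_union_le _ _).trans (add_le_add hE₀ hE₁), fun a ha b hb => ?_⟩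
  obtain ⟨u, hu, hau⟩ := hnet a ha
  obtain ⟨v, hv, hbv⟩ := hnet b hb
  rw [← union_assoc]
  rcases hsep u hu v hv with huv | ⟨C, hCE, rfl, hC⟩
  · left
    intro i hi
    by_contra hiE
    rw [mem_union, not_or] at hiE
    exact (mem_conflicts.1 hi).2.2
      ((hau hiE.1).trans ((huv ⟨hiE.1, hiE.2⟩).trans (hbv hiE.1).symm))
  · right
    refine card_le_card fun i hi => mem_inter.2 ⟨?_, mem_union_right _ (hCE hi)⟩
    have hiU := hE₁U (hCE hi)
    have hiT : i ∉ T := fun h => hiU (mem_union_left _ h)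
    refine mem_conflicts.2 ⟨mt (hT a ha i) hiT, mt (hT b hb i) hiT, ?_⟩
    rw [hau hiU, hbv hiU]
    exact hC i hi

theorem exists_net_card_le [Finite κ] {f : α → ι → Option Bool} (c : α → κ)
    (hc : ∀ a b, c a = c b → pdist (f a) (f b) ≤ γ) (N : Finset α) :
    ∃ V ⊆ N, #V ≤ Nat.card κ ∧ ∀ a ∈ N, ∃ b ∈ V, pdist (f a) (f b) ≤ γ := by
  obtain ⟨V, hVN, hinj, himage⟩ :=
    exists_subset_injOn_image_eq_of_surjOn (f := c) (N : Set α) (N.image c)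
      (by rw [coe_image]; exact Set.surjOn_image c N)
  refine ⟨V, hVN, ?_, fun a ha => ?_⟩
  · have := Fintype.ofFinite κ
    rw [← card_image_of_injOn hinj, Nat.card_eq_fintype_card]
    exact card_le_univ _
  · obtain ⟨b, hb, hba⟩ := mem_image.1 (himage ▸ mem_image_of_mem c ha)
    exact ⟨b, hb, hc a b hba.symm⟩

theorem sub_mul_add_mul_pred_le {n v : ℕ} (hv : 0 < v) (hvn : v ≤ n) (hvk : v ≤ k)
    (hm : m ≤ γ * n) : (n - v) * γ + m * (v - 1) ≤ k * γ * (n - 1) := by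
  obtain ⟨c, rfl⟩ : ∃ c, v = c + 1 := ⟨v - 1, by omega⟩
  obtain ⟨t, rfl⟩ : ∃ t, n = c + 1 + t := ⟨n - (c + 1), by omega⟩
  calc (c + 1 + t - (c + 1)) * γ + m * (c + 1 - 1)
      ≤ t * γ + γ * (c + 1 + t) * c := by
        rw [Nat.add_sub_cancel_left, Nat.add_sub_cancel]
        gcongr
    _ = (c + 1) * γ * (c + t) := by ring
    _ ≤ k * γ * (c + 1 + t - 1) := by
        rw [show c + 1 + t - 1 = c + t by omega]
        gcongr

theorem exists_finset_resolves_of_classes [Fintype α] [Finite κ] {f : α → ι → Option Bool}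
    {N : Finset α} (hT : ∀ a ∈ N, ∀ i, f a i = none → i ∈ T) (c : α → κ) (hκ : Nat.card κ ≤ k)
    (hc : ∀ a b, c a = c b → pdist (f a) (f b) ≤ γ) (hm : m ≤ γ * Fintype.card α) :
    ∃ E : Finset ι, #E ≤ k * γ * (Fintype.card α - 1) ∧
      ∀ a ∈ N, ∀ b ∈ N, Resolves (T ∪ E) m (f a) (f b) := by
  rcases N.eq_empty_or_nonempty with rfl | ⟨a, ha⟩
  · exact ⟨∅, by simp, by simp⟩
  obtain ⟨V, hVN, hVκ, hV⟩ := exists_net_card_le c hc N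
  obtain ⟨E, hE, hres⟩ := exists_finset_resolves_of_net hT hVN hV m
  obtain ⟨b, hb, -⟩ := hV a ha
  refine ⟨E, ?_, hres⟩
  calc #E ≤ (#N - #V) * γ + m * (#V - 1) := hE
    _ ≤ (Fintype.card α - #V) * γ + m * (#V - 1) := by
        gcongr
        exact card_le_univ N
    _ ≤ k * γ * (Fintype.card α - 1) :=
        sub_mul_add_mul_pred_le (card_pos.2 ⟨b, hb⟩) (card_le_univ V) (hVκ.trans hκ) hm

theorem exists_resolves_card_le (a b : ι → Option Bool) (m : ℕ) :
    ∃ E : Finset ι, #E ≤ m ∧ Resolves E m a b := by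
  rcases le_total #(conflicts a b) m with h | h
  · exact ⟨conflicts a b, h, Or.inl subset_rfl⟩
  · obtain ⟨E, hE, hEm⟩ := exists_subset_card_eq h
    exact ⟨E, hEm.le, Or.inr (by rw [inter_eq_right.2 hE, hEm])⟩

theorem exists_finset_resolves_of_mem [Fintype α] (f : α → ι → Option Bool) (Q : Finset α)
    (m : ℕ) :
    ∃ E : Finset ι, #E ≤ #Q * (Fintype.card α - 1) * m ∧
      ∀ a ∈ Q, ∀ b, Resolves E m (f a) (f b) := by
  choose E hEcard hE using fun a b => exists_resolves_card_le (f a) (f b) m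
  refine ⟨Q.biUnion fun a => (univ.erase a).biUnion (E a), ?_, fun a ha b => ?_⟩
  · rw [mul_assoc]
    refine card_biUnion_le_card_mul _ _ _ fun a _ => ?_
    rw [← card_univ, ← card_erase_of_mem (mem_univ a)]
    exact card_biUnion_le_card_mul _ _ _ fun b _ => hEcard a b
  rcases eq_or_ne b a with rfl | hba
  · exact Or.inl (by simp [conflicts_self])
  · refine (hE a b).mono fun i hi => ?_
    simp only [mem_biUnion, mem_erase]
    exact ⟨a, ha, b, ⟨hba, mem_univ b⟩, hi⟩

theorem exists_finset_resolves_of_cover [Fintype α] [Finite κ] {f : α → ι → Option Bool}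
    {Q : Finset α} (hcover : ∀ a i, f a i = none → a ∈ Q ∨ i ∈ T) (c : α → κ)
    (hκ : Nat.card κ ≤ k) (hc : ∀ a b, c a = c b → pdist (f a) (f b) ≤ γ)
    (hm : m ≤ γ * Fintype.card α) :
    ∃ D : Finset ι,
      #D ≤ k * γ * (Fintype.card α - 1) + #Q * (Fintype.card α - 1) * m + #T ∧
      ∀ a b, Resolves D m (f a) (f b) := by
  obtain ⟨E, hE, hresE⟩ := exists_finset_resolves_of_classes (N := Qᶜ)
    (fun a ha i hi => (hcover a i hi).resolve_left (mem_compl.1 ha)) c hκ hc hm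
  obtain ⟨E', hE', hresE'⟩ := exists_finset_resolves_of_mem f Q m
  have hsub : E' ⊆ E ∪ E' ∪ T := subset_union_right.trans subset_union_left
  refine ⟨E ∪ E' ∪ T, ?_, fun a b => ?_⟩
  · have h₁ := card_union_le (E ∪ E') T
    have h₂ := card_union_le E E'
    omega
  by_cases ha : a ∈ Q
  · exact (hresE' a ha b).mono hsub
  by_cases hb : b ∈ Q
  · exact ((hresE' b hb a).mono hsub).symm
  · exact (hresE a (mem_compl.2 ha) b (mem_compl.2 hb)).mono
      (union_subset subset_union_right (subset_union_left.trans subset_union_left))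

theorem pdist_le_gammaMax {F : Finset (ι → Option Bool)} {ρ : ℕ} {u v : {v // v ∈ F}}
    (h : (compatGraph F ρ).Reachable u v) : pdist u.1 v.1 ≤ gammaMax F ρ := by
  refine le_csSup ⟨Fintype.card ι, ?_⟩ ⟨u, v, h, rfl⟩
  rintro n ⟨a, b, -, rfl⟩
  exact card_le_univ _

end

open Finset in
theorem statement_9_general {ι : Type} {κ : Type*} [Fintype ι] [Finite κ] {k r γ : ℕ}
    (M R : Multiset (ι → Option Bool)) (T : Finset ι)
    (hcover : ∀ v ∈ M, ∀ i, v i = none → v ∈ R ∨ i ∈ T)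
    (c : {v // v ∈ M.toFinset} → κ) (hκ : Nat.card κ ≤ k)
    (hc : ∀ u v, c u = c v → pdist u.1 v.1 ≤ γ) :
    ∃ D : Finset ι,
      #D ≤ k * γ * (Multiset.card M - 1)
          + Multiset.card R * (Multiset.card M - 1) * (2 * r + 1) + #T ∧
      ((∃ Mc : Multiset (ι → Bool), IsCompletion M Mc ∧
          ∃ S : Finset (ι → Bool), #S ≤ k ∧ ∀ a ∈ Mc, ∃ s ∈ S, hammingDist s a ≤ r) ↔
        (∃ Nc : Multiset ({i // i ∈ D} → Bool), IsCompletion (M.map (restrictV D)) Nc ∧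
          ∃ S : Finset ({i // i ∈ D} → Bool), #S ≤ k ∧
            ∀ a ∈ Nc, ∃ s ∈ S, hammingDist s a ≤ r)) := by
  simp only [exists_isCompletion_iff_hasCenters]
  rcases le_or_gt (γ * #M.toFinset) (2 * r) with hr | hr
  · have hM : HasCenters M k r := .of_classes c hκ hc hr
    exact ⟨∅, by simp, fun _ => hM.restrict ∅, fun _ => hM⟩
  let Q : Finset {v // v ∈ M.toFinset} := {v | v.1 ∈ R}
  have hQ : #Q ≤ Multiset.card R := by
    refine (card_le_card_of_injOn Subtype.val (fun v hv => ?_)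
      Subtype.val_injective.injOn).trans (Multiset.toFinset_card_le R)
    simpa [Q] using hv
  obtain ⟨D, hDcard, hD⟩ := exists_finset_resolves_of_cover (f := Subtype.val) (Q := Q) (T := T)
    (fun v i hi => by simpa [Q] using hcover v (Multiset.mem_toFinset.1 v.2) i hi) c hκ hc
    (hr.trans_eq (by rw [Fintype.card_coe]))
  refine ⟨D, hDcard.trans ?_, fun h => h.restrict D, .of_restrict fun v hv w hw =>
    hD ⟨v, Multiset.mem_toFinset.2 hv⟩ ⟨w, Multiset.mem_toFinset.2 hw⟩⟩
  rw [Fintype.card_coe]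
  gcongr <;> exact Multiset.toFinset_card_le M

theorem statement_9 {d : ℕ} (k r : ℕ)
    (M R : Multiset (Fin d → Option Bool)) (T : Finset (Fin d))
    (hRM : R ≤ M)
    (hcover : ∀ v ∈ M, ∀ i : Fin d, v i = none → v ∈ R ∨ i ∈ T)
    (M' : Multiset (Fin d → Option Bool)) (hM'M : M' ≤ M)
    (hcomp : Nat.card (compatGraph M'.toFinset (2 * r)).ConnectedComponent ≤ k) :
    ∃ D' : Finset (Fin d),
      D'.card ≤ k * gammaMax M'.toFinset (2 * r) * (Multiset.card M' - 1)
          + Multiset.card R * (Multiset.card M' - 1) * (2 * r + 1) + T.card ∧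
      ((∃ Mc : Multiset (Fin d → Bool), IsCompletion M' Mc ∧
          ∃ S : Finset (Fin d → Bool), S.card ≤ k ∧
            ∀ a ∈ Mc, ∃ s ∈ S, hammingDist s a ≤ r) ↔
        (∃ Nc : Multiset ({i // i ∈ D'} → Bool),
          IsCompletion (M'.map (restrictV D')) Nc ∧
          ∃ S' : Finset ({i // i ∈ D'} → Bool), S'.card ≤ k ∧
            ∀ a ∈ Nc, ∃ s ∈ S', hammingDist s a ≤ r)) := by
  exact statement_9_general M' R T (fun v hv => hcover v (Multiset.mem_of_le hM'M hv))
    (compatGraph M'.toFinset (2 * r)).connectedComponentMk hcomp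
    fun _ _ h => pdist_le_gammaMax (SimpleGraph.ConnectedComponent.exact h)
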